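/- Let Q be the optimal Q-function for reward r. If Q̃ is the optimal Q-function for the negated reward (s,a) ↦ −r(s,a) (the NOT gate), then for all (s,a): Q̃(s,a) ≥ −Q(s,a). -/

import Mathlib

/-!
Since a maximum is subadditive, `Q + Qt` is a supersolution of the Bellman equation whose reward is
`r + (-r) = 0`, while `0` solves that equation. Discounting gives a comparison principle:
a subsolution lies below every supersolution, as one sees where their difference is largest. Hence
`0 ≤ Q + Qt`.
-/

open Finset

/-- Maximum of a real-valued function over a nonempty finite action set. -/
noncomputable def amax {A : Type*} [Fintype A] [Nonempty A] (g : A → ℝ) : ℝ :=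
  Finset.univ.sup' Finset.univ_nonempty g

section amax

variable {A : Type*} [Fintype A] [Nonempty A]

lemma le_amax (g : A → ℝ) (a : A) : g a ≤ amax g :=
  le_sup' g (mem_univ a)

lemma amax_le {g : A → ℝ} {c : ℝ} (h : ∀ a, g a ≤ c) : amax g ≤ c :=
  sup'_le _ _ fun a _ => h a

lemma amax_zero : amax (0 : A → ℝ) = 0 :=
  sup'_const _ 0

lemma amax_add_le (f g : A → ℝ) : amax (f + g) ≤ amax f + amax g :=
  amax_le fun a => add_le_add (le_amax f a) (le_amax g a)

end amax

section bellmanOp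

variable {S A : Type*} [Fintype S] [Fintype A] [Nonempty A]

/-- The Bellman optimality operator with reward `r`, whose fixed points are the optimal
Q-functions. The discount is absorbed into the transition weights `k`: a transition kernel `p` and
a discount factor `γ` correspond to `k s a s' = γ * p s a s'`. -/
noncomputable def bellmanOp (k : S → A → S → ℝ) (r Q : S → A → ℝ) : S → A → ℝ :=
  fun s a => r s a + ∑ s', k s a s' * amax (Q s')

lemma bellmanOp_discount (p : S → A → S → ℝ) (γ : ℝ) (r Q : S → A → ℝ) (s : S) (a : A) :
    bellmanOp (fun s a s' => γ * p s a s') r Q s a =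
      r s a + γ * ∑ s', p s a s' * amax (Q s') := by
  simp only [bellmanOp, mul_assoc, mul_sum]

variable {k : S → A → S → ℝ}

lemma bellmanOp_zero_zero : bellmanOp k 0 0 = 0 := by
  ext s a
  simp [bellmanOp, amax_zero]

lemma bellmanOp_add_le (hk : ∀ s a s', 0 ≤ k s a s') (r₁ r₂ Q₁ Q₂ : S → A → ℝ) :
    bellmanOp k (r₁ + r₂) (Q₁ + Q₂) ≤ bellmanOp k r₁ Q₁ + bellmanOp k r₂ Q₂ := by
  intro s a
  calc r₁ s a + r₂ s a + ∑ s', k s a s' * amax (Q₁ s' + Q₂ s')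
    _ ≤ r₁ s a + r₂ s a + ∑ s', k s a s' * (amax (Q₁ s') + amax (Q₂ s')) := by
      gcongr with s'
      · exact hk s a s'
      · exact amax_add_le _ _
    _ = bellmanOp k r₁ Q₁ s a + bellmanOp k r₂ Q₂ s a := by
      simp only [bellmanOp, mul_add, sum_add_distrib]
      ring

lemma bellmanOp_le_add_const (hk : ∀ s a s', 0 ≤ k s a s') {u v : S → A → ℝ} {c : ℝ}
    (h : ∀ s a, u s a ≤ v s a + c) (r : S → A → ℝ) (s : S) (a : A) :
    bellmanOp k r u s a ≤ bellmanOp k r v s a + (∑ s', k s a s') * c := by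
  have amax_shift (s' : S) : amax (u s') ≤ amax (v s') + c :=
    amax_le fun a' => (h s' a').trans (by gcongr; exact le_amax _ _)
  calc r s a + ∑ s', k s a s' * amax (u s')
    _ ≤ r s a + ∑ s', k s a s' * (amax (v s') + c) := by
      gcongr with s'
      · exact hk s a s'
      · exact amax_shift s'
    _ = bellmanOp k r v s a + (∑ s', k s a s') * c := by
      simp only [bellmanOp, mul_add, sum_add_distrib, sum_mul, add_assoc]

theorem le_of_le_bellmanOp_of_bellmanOp_le (hk : ∀ s a s', 0 ≤ k s a s')
    (hk_lt : ∀ s a, ∑ s', k s a s' < 1) {r u v : S → A → ℝ}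
    (hu : u ≤ bellmanOp k r u) (hv : bellmanOp k r v ≤ v) : u ≤ v := by
  intro s a
  have : Nonempty S := ⟨s⟩
  obtain ⟨⟨s₀, a₀⟩, hmax⟩ := Finite.exists_max fun x : S × A => u x.1 x.2 - v x.1 x.2
  set M := u s₀ a₀ - v s₀ a₀
  have u_le (s : S) (a : A) : u s a ≤ v s a + M := sub_le_iff_le_add'.mp (hmax (s, a))
  have M_le : M ≤ (∑ s', k s₀ a₀ s') * M := sub_le_iff_le_add'.mpr <|
    calc u s₀ a₀
      _ ≤ bellmanOp k r u s₀ a₀ := hu s₀ a₀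
      _ ≤ bellmanOp k r v s₀ a₀ + (∑ s', k s₀ a₀ s') * M := bellmanOp_le_add_const hk u_le r s₀ a₀
      _ ≤ v s₀ a₀ + (∑ s', k s₀ a₀ s') * M := by gcongr; exact hv s₀ a₀
  have M_nonpos : M ≤ 0 := by
    by_contra! hpos
    exact M_le.not_gt (mul_lt_of_lt_one_left hpos (hk_lt s₀ a₀))
  linarith [u_le s a]

theorem le_add_of_isFixedPt_bellmanOp (hk : ∀ s a s', 0 ≤ k s a s')
    (hk_lt : ∀ s a, ∑ s', k s a s' < 1) {r₁ r₂ Q Q₁ Q₂ : S → A → ℝ}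
    (hQ : (bellmanOp k (r₁ + r₂)).IsFixedPt Q) (hQ₁ : (bellmanOp k r₁).IsFixedPt Q₁)
    (hQ₂ : (bellmanOp k r₂).IsFixedPt Q₂) : Q ≤ Q₁ + Q₂ :=
  le_of_le_bellmanOp_of_bellmanOp_le hk hk_lt hQ.ge <|
    (bellmanOp_add_le hk r₁ r₂ Q₁ Q₂).trans_eq (congrArg₂ (· + ·) hQ₁ hQ₂)

theorem not_gate_standard_rl_general (hk : ∀ s a s', 0 ≤ k s a s')
    (hk_lt : ∀ s a, ∑ s', k s a s' < 1) {r Q Qt : S → A → ℝ}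
    (hQ : (bellmanOp k r).IsFixedPt Q) (hQt : (bellmanOp k (-r)).IsFixedPt Qt) : -Q ≤ Qt := by
  have zero_isFixedPt : (bellmanOp k (r + -r)).IsFixedPt 0 := by
    rw [add_neg_cancel]
    exact bellmanOp_zero_zero
  exact neg_le_iff_add_nonneg'.mpr (le_add_of_isFixedPt_bellmanOp hk hk_lt zero_isFixedPt hQ hQt)

end bellmanOp

/-- **NOT gate, standard RL:** the optimal Q-function for the negated reward dominates
the negated primitive optimal Q-function. -/
theorem not_gate_standard_rl
    {S A : Type*} [Fintype S] [Fintype A] [Nonempty S] [Nonempty A]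
    (p : S → A → S → ℝ)
    (hp_nonneg : ∀ s a s', 0 ≤ p s a s')
    (hp_sum : ∀ s a, ∑ s', p s a s' = 1)
    (γ : ℝ) (hγ0 : 0 < γ) (hγ1 : γ < 1)
    (r : S → A → ℝ)
    -- Q is the optimal Q-function for reward r
    (Q : S → A → ℝ)
    (hQ : ∀ s a, Q s a = r s a + γ * ∑ s', p s a s' * amax (fun a' => Q s' a'))
    -- Q̃ is the optimal Q-function for the negated reward
    (Qt : S → A → ℝ)
    (hQt : ∀ s a, Qt s a = -r s a + γ * ∑ s', p s a s' * amax (fun a' => Qt s' a')) :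
    ∀ s a, -Q s a ≤ Qt s a :=
  not_gate_standard_rl_general (fun s a s' => mul_nonneg hγ0.le (hp_nonneg s a s'))
    (fun s a => by rwa [← mul_sum, hp_sum, mul_one])
    (funext₂ fun s a => (bellmanOp_discount p γ r Q s a).trans (hQ s a).symm)
    (funext₂ fun s a => (bellmanOp_discount p γ (-r) Qt s a).trans (hQt s a).symm)
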